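/- Let A ∈ ℝ^{n×n}, B ∈ ℝ^{n×m} with (A,B) stabilizable and all eigenvalues of A in the closed unit disc, and let κ̄ ∈ ℕ satisfy κ̄·ω_max < π/2. Let ρ > 0 satisfy ρ·cos(κ̄·ω_max) > 1/2. Then there exists ε* > 0 such that for all ε ∈ (0, ε*], all ω ∈ [−π, π], and all integers κ ∈ {0, …, κ̄}: det[ e^{iω} I − A + ρ e^{−iωκ} B K_ε ] ≠ 0, where P_ε is the unique positive definite solution of the discrete algebraic Riccati equation AᵀP A − P − AᵀP B (I + BᵀP B)^{−1} BᵀP A + εI = 0 and K_ε := (I + BᵀP_ε B)^{−1} BᵀP_ε A. -/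

import Mathlib

open Matrix Filter Topology Kronecker
open scoped Classical

noncomputable section

/-- A complex square matrix is Schur stable if all its eigenvalues lie in the open unit disc. -/
def SchurStableC {ι : Type*} [Fintype ι] [DecidableEq ι] (M : Matrix ι ι ℂ) : Prop :=
  ∀ μ ∈ spectrum ℂ M, ‖μ‖ < 1

/-- A real square matrix is Schur stable if all its (complex) eigenvalues lie in the open
unit disc. -/
def SchurStable {ι : Type*} [Fintype ι] [DecidableEq ι] (M : Matrix ι ι ℝ) : Prop :=
  SchurStableC (M.map Complex.ofReal)

/-- All eigenvalues of a real square matrix lie in the closed unit disc. -/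
def EigInClosedUnitDisc {ι : Type*} [Fintype ι] [DecidableEq ι] (M : Matrix ι ι ℝ) : Prop :=
  ∀ μ ∈ spectrum ℂ (M.map Complex.ofReal), ‖μ‖ ≤ 1

/-- The pair (A,B) is stabilizable. -/
def Stabilizable {n m : ℕ} (A : Matrix (Fin n) (Fin n) ℝ) (B : Matrix (Fin n) (Fin m) ℝ) : Prop :=
  ∃ K : Matrix (Fin m) (Fin n) ℝ, SchurStable (A - B * K)

/-- The pair (C,A) is detectable. -/
def Detectable {n q : ℕ} (C : Matrix (Fin q) (Fin n) ℝ) (A : Matrix (Fin n) (Fin n) ℝ) : Prop :=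
  ∃ F : Matrix (Fin n) (Fin q) ℝ, SchurStable (A - F * C)

/-- `P` is a positive definite solution of the discrete algebraic Riccati equation
`AᵀPA − P − AᵀPB(I + BᵀPB)⁻¹BᵀPA + εI = 0`. -/
def IsDARESol {n m : ℕ} (A : Matrix (Fin n) (Fin n) ℝ) (B : Matrix (Fin n) (Fin m) ℝ)
    (ε : ℝ) (P : Matrix (Fin n) (Fin n) ℝ) : Prop :=
  P.PosDef ∧
    Aᵀ * P * A - P - Aᵀ * P * B * (1 + Bᵀ * P * B)⁻¹ * (Bᵀ * P * A)
      + ε • (1 : Matrix (Fin n) (Fin n) ℝ) = 0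

/-- The low-gain feedback `K = (I + BᵀPB)⁻¹BᵀPA`. -/
def gainK {n m : ℕ} (A : Matrix (Fin n) (Fin n) ℝ) (B : Matrix (Fin n) (Fin m) ℝ)
    (P : Matrix (Fin n) (Fin n) ℝ) : Matrix (Fin m) (Fin n) ℝ :=
  (1 + Bᵀ * P * B)⁻¹ * (Bᵀ * P * A)

/-- `ω_max`: zero if `A` is Schur stable, otherwise the largest `ω ∈ [0,π]` with
`det(e^{iω}I − A) = 0`. -/
def omegaMax {n : ℕ} (A : Matrix (Fin n) (Fin n) ℝ) : ℝ :=
  if SchurStable A then 0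
  else sSup {ω : ℝ | ω ∈ Set.Icc 0 Real.pi ∧
    (Complex.exp (ω * Complex.I) • (1 : Matrix (Fin n) (Fin n) ℂ)
      - A.map Complex.ofReal).det = 0}

/-- In-degree `d_in(i) = Σ_j a_{ij}`. -/
def dIn {N : ℕ} (a : Fin N → Fin N → ℝ) (i : Fin N) : ℝ := ∑ j, a i j

/-- The Laplacian matrix of the weights `a`. -/
def lapL {N : ℕ} (a : Fin N → Fin N → ℝ) : Matrix (Fin N) (Fin N) ℝ :=
  Matrix.of fun i j => if i = j then dIn a i else -a i j

/-- The expanded Laplacian `L̄ = L + diag(ι)`. -/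
def lapLbar {N : ℕ} (a : Fin N → Fin N → ℝ) (ι : Fin N → ℝ) : Matrix (Fin N) (Fin N) ℝ :=
  lapL a + Matrix.diagonal ι

/-- `D̄ = I − (2I + D_in)⁻¹ L̄`. -/
def DbarM {N : ℕ} (a : Fin N → Fin N → ℝ) (ι : Fin N → ℝ) : Matrix (Fin N) (Fin N) ℝ :=
  1 - ((2 : ℝ) • (1 : Matrix (Fin N) (Fin N) ℝ) + Matrix.diagonal (dIn a))⁻¹ * lapLbar a ι

section DD
open scoped ComplexOrder

lemma dd_mem_spec {n : ℕ} (M : Matrix (Fin n) (Fin n) ℂ) (μ : ℂ) :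
    μ ∈ spectrum ℂ M ↔ (μ • (1 : Matrix (Fin n) (Fin n) ℂ) - M).det = 0 := by
  rw [Matrix.mem_spectrum_iff_isRoot_charpoly, Polynomial.IsRoot, Matrix.eval_charpoly,
    Matrix.smul_one_eq_diagonal]
  rfl

lemma dd_eig_conj {n : ℕ} (M : Matrix (Fin n) (Fin n) ℂ) (μ : ℂ) (w : Fin n → ℂ) (hw : w ≠ 0)
    (h : Mᴴ *ᵥ w = μ • w) : star μ ∈ spectrum ℂ M := by
  rw [dd_mem_spec]
  have h1 : (μ • (1 : Matrix (Fin n) (Fin n) ℂ) - Mᴴ).det = 0 := by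
    rw [← Matrix.exists_mulVec_eq_zero_iff]
    exact ⟨w, hw, by rw [Matrix.sub_mulVec, h, Matrix.smul_mulVec, Matrix.one_mulVec, sub_self]⟩
  have h2 : (star μ • (1 : Matrix (Fin n) (Fin n) ℂ) - M) =
      (μ • (1 : Matrix (Fin n) (Fin n) ℂ) - Mᴴ)ᴴ := by
    simp
  rw [h2, Matrix.det_conjTranspose, h1, star_zero]

lemma dd_self {k : ℕ} (u : Fin k → ℂ) : (star u ⬝ᵥ u).im = 0 ∧ 0 ≤ (star u ⬝ᵥ u).re := by
  have : 0 ≤ star u ⬝ᵥ u := dotProduct_star_self_nonneg u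
  rw [Complex.le_def] at this
  exact ⟨this.2.symm, this.1⟩

lemma dd_adj {k l : ℕ} (M : Matrix (Fin k) (Fin l) ℂ) (x : Fin k → ℂ) (y : Fin l → ℂ) :
    star x ⬝ᵥ M *ᵥ y = star (Mᴴ *ᵥ x) ⬝ᵥ y := by
  rw [Matrix.star_mulVec, conjTranspose_conjTranspose, Matrix.dotProduct_mulVec]

lemma dd_psd_ne {n : ℕ} {P : Matrix (Fin n) (Fin n) ℂ} (hP : P.PosSemidef) (z : Fin n → ℂ)
    (hz : P *ᵥ z ≠ 0) : (star z ⬝ᵥ P *ᵥ z).im = 0 ∧ 0 < (star z ⬝ᵥ P *ᵥ z).re := by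
  have h := hP.dotProduct_mulVec_nonneg z
  have h' := h
  rw [Complex.le_def] at h
  refine ⟨h.2.symm, lt_of_le_of_ne h.1 fun h0 => hz ?_⟩
  rw [← hP.dotProduct_mulVec_zero_iff]
  exact Complex.ext h0.symm h.2.symm

/-- zero lemma -/
lemma dd_zero {n m : ℕ} (A P : Matrix (Fin n) (Fin n) ℂ) (B : Matrix (Fin n) (Fin m) ℂ)
    (K F : Matrix (Fin m) (Fin n) ℂ) (hP : P.PosSemidef)
    (hK : Bᴴ * P * A = K + Bᴴ * P * B * K) (hD : P = Aᴴ * P * (A - B * K))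
    (hA : ∀ μ ∈ spectrum ℂ A, ‖μ‖ ≤ 1) (hF : SchurStableC (A - B * F)) : P = 0 := by
  by_contra hne
  let f := Matrix.mulVecLin Aᴴ
  let W := LinearMap.range P.mulVecLin
  have hle : W ≤ W.map f := by
    rintro _ ⟨z, rfl⟩
    refine ⟨P *ᵥ ((A - B * K) *ᵥ z), ⟨_, rfl⟩, ?_⟩
    simp only [f, Matrix.mulVecLin_apply, Matrix.mulVec_mulVec]
    rw [← Matrix.mul_assoc, ← hD]
  have heq : W = W.map f := Submodule.eq_of_le_of_finrank_le hle (Submodule.finrank_map_le f W)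
  have hmaps : ∀ x ∈ W, f x ∈ W := fun x hx => by
    rw [heq]; exact ⟨x, hx, rfl⟩
  let g : Module.End ℂ W := f.restrict hmaps
  have hsurj : Function.Surjective g := by
    rintro ⟨y, hy⟩
    have hy' := hy
    rw [heq] at hy'
    obtain ⟨x, hx, hxy⟩ := hy'
    exact ⟨⟨x, hx⟩, Subtype.ext hxy⟩
  have hinj : Function.Injective g := LinearMap.injective_iff_surjective.mpr hsurj
  have : Nontrivial W := by
    rw [Submodule.nontrivial_iff_ne_bot]
    intro h
    apply hne
    have := LinearMap.range_eq_bot.mp h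
    ext i j
    have h3 := congrFun (LinearMap.congr_fun this (Pi.single j 1)) i
    simpa using h3
  obtain ⟨μ, hμ⟩ := Module.End.exists_eigenvalue g
  obtain ⟨⟨w, hw⟩, hv⟩ := hμ.exists_hasEigenvector
  have hw0 : w ≠ 0 := fun h => hv.2 (Subtype.ext h)
  have hgw := hv.apply_eq_smul
  have hfw : Aᴴ *ᵥ w = μ • w := congrArg Subtype.val hgw
  obtain ⟨z, hz⟩ := hw
  have hz : P *ᵥ z = w := hz
  have hμ0 : μ ≠ 0 := by
    rintro rfl
    apply hv.2
    apply hinj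
    rw [hgw]; simp
  -- P A_c z = μ⁻¹ w
  have hPc : P *ᵥ ((A - B * K) *ᵥ z) = μ⁻¹ • w := by
    have h1 : g ⟨P *ᵥ ((A - B * K) *ᵥ z), ⟨_, rfl⟩⟩ = g (μ⁻¹ • ⟨w, ⟨z, hz⟩⟩) := by
      rw [map_smul, hgw, smul_smul, inv_mul_cancel₀ hμ0, one_smul]
      apply Subtype.ext
      change Aᴴ *ᵥ (P *ᵥ ((A - B * K) *ᵥ z)) = w
      rw [Matrix.mulVec_mulVec, Matrix.mulVec_mulVec, ← hD, hz]
    exact congrArg Subtype.val (hinj h1)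
  have hAeq : A = (A - B * K) + B * (Bᴴ * (P * (A - B * K))) := by
    have : Bᴴ * (P * (A - B * K)) = K := by
      rw [Matrix.mul_sub, Matrix.mul_sub]
      simp only [Matrix.mul_assoc] at hK ⊢
      rw [hK]; abel
    rw [this]; abel
  have hAz : P *ᵥ (A *ᵥ z) = μ⁻¹ • (w + P *ᵥ (B *ᵥ (Bᴴ *ᵥ w))) := by
    rw [hAeq, Matrix.add_mulVec, Matrix.mulVec_add, hPc]
    simp only [← Matrix.mulVec_mulVec]
    rw [hPc]
    simp only [Matrix.mulVec_smul, smul_add]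
  have hPH : Pᴴ = P := hP.isHermitian
  have e1 : star z ⬝ᵥ P *ᵥ (A *ᵥ z) = star μ * (star z ⬝ᵥ P *ᵥ z) := by
    rw [dd_adj P, hPH, hz, dd_adj A, hfw, star_smul, smul_dotProduct, ← hz, dd_adj P, hPH]; rfl
  have e2 : star z ⬝ᵥ P *ᵥ (A *ᵥ z) =
      μ⁻¹ * ((star z ⬝ᵥ P *ᵥ z) + star (Bᴴ *ᵥ w) ⬝ᵥ (Bᴴ *ᵥ w)) := by
    rw [hAz, dotProduct_smul, dotProduct_add, dd_adj P, hPH, hz, dd_adj B]; rfl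
  obtain ⟨q0, q1⟩ := dd_psd_ne hP z (by rw [hz]; exact hw0)
  obtain ⟨b0, b1⟩ := dd_self (Bᴴ *ᵥ w)
  set q := star z ⬝ᵥ P *ᵥ z
  set b := star (Bᴴ *ᵥ w) ⬝ᵥ (Bᴴ *ᵥ w) with hb
  have e3 : (Complex.normSq μ : ℂ) * q = q + b := by
    rw [Complex.normSq_eq_conj_mul_self]
    have : star μ * q = μ⁻¹ * (q + b) := e1.symm.trans e2
    have h4 : (starRingEnd ℂ) μ * q = μ⁻¹ * (q + b) := this
    calc _ = μ * ((starRingEnd ℂ) μ * q) := by ring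
      _ = _ := by rw [h4, ← mul_assoc, mul_inv_cancel₀ hμ0, one_mul]
  have e4 : Complex.normSq μ * q.re = q.re + b.re := by
    have := congrArg Complex.re e3
    simpa using this
  have hmu : ‖μ‖ ≤ 1 := by
    have := hA _ (dd_eig_conj A μ w hw0 hfw)
    simpa using this
  have hn : Complex.normSq μ ≤ 1 := by
    rw [Complex.normSq_eq_norm_sq]; nlinarith [norm_nonneg μ]
  have hbre : b.re = 0 := by nlinarith
  have hbz : Bᴴ *ᵥ w = 0 := by
    rw [← dotProduct_star_self_eq_zero]
    exact Complex.ext hbre b0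
  have hF' := hF _ (dd_eig_conj (A - B * F) μ w hw0 (by
    rw [conjTranspose_sub, conjTranspose_mul, Matrix.sub_mulVec, ← Matrix.mulVec_mulVec, hbz, hfw]
    simp))
  have hlt : Complex.normSq μ < 1 := by
    rw [Complex.normSq_eq_norm_sq]
    have : ‖μ‖ < 1 := by simpa using hF'
    nlinarith [norm_nonneg μ]
  nlinarith

/-- Lyapunov -/
lemma dd_lyap {n m : ℕ} (A P : Matrix (Fin n) (Fin n) ℂ) (B : Matrix (Fin n) (Fin m) ℂ)
    (K : Matrix (Fin m) (Fin n) ℂ) (hP : P.PosSemidef) (ε : ℝ) (hε : 0 < ε)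
    (hK : Bᴴ * P * A = K + Bᴴ * P * B * K)
    (hD : P = Aᴴ * P * (A - B * K) + (ε : ℂ) • (1 : Matrix (Fin n) (Fin n) ℂ))
    (v : Fin n → ℂ) (hv : v ≠ 0) (l ζ : ℂ) (hζ : ‖ζ‖ = 1)
    (he : A *ᵥ v - l • (B *ᵥ (K *ᵥ v)) = ζ • v) (s : ℝ)
    (hs : ∀ u : Fin m → ℂ, (star u ⬝ᵥ (Bᴴ * P * B) *ᵥ u).re ≤ s * (star u ⬝ᵥ u).re)
    (hl : ‖l‖ ^ 2 * s ≤ 2 * l.re - 1) (hl0 : 0 < 2 * l.re - 1) : False := by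
  have hPH : Pᴴ = P := hP.isHermitian
  set u := K *ᵥ v with hu
  set x := A *ᵥ v with hx
  set y := B *ᵥ u with hy
  have hd := hP.dotProduct_mulVec_nonneg y
  rw [Complex.le_def] at hd
  obtain ⟨U0, U1⟩ := dd_self u
  obtain ⟨N0, N1⟩ := dd_self v
  have N2 : (star v ⬝ᵥ v).re ≠ 0 := fun h => hv (by
    rw [← dotProduct_star_self_eq_zero]; exact Complex.ext h N0)
  have hdM : star u ⬝ᵥ (Bᴴ * P * B) *ᵥ u = star y ⬝ᵥ P *ᵥ y := by
    rw [← Matrix.mulVec_mulVec, ← Matrix.mulVec_mulVec, dd_adj Bᴴ, conjTranspose_conjTranspose]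
  have hb : star y ⬝ᵥ P *ᵥ x = star u ⬝ᵥ u + star y ⬝ᵥ P *ᵥ y := by
    have h1 : (Bᴴ * P * A) *ᵥ v = u + (Bᴴ * P * B) *ᵥ u := by
      rw [hK, Matrix.add_mulVec, Matrix.mulVec_mulVec]
    have h2 := congrArg (fun t => star u ⬝ᵥ t) h1
    simp only [dotProduct_add, hdM] at h2
    rw [← h2, ← Matrix.mulVec_mulVec, ← Matrix.mulVec_mulVec, dd_adj Bᴴ, conjTranspose_conjTranspose]
  have hb' : star x ⬝ᵥ P *ᵥ y = star (star y ⬝ᵥ P *ᵥ x) := by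
    rw [dd_adj P, hPH, Matrix.star_dotProduct]
    
  have hv1 : star v ⬝ᵥ P *ᵥ v = star x ⬝ᵥ P *ᵥ x - star x ⬝ᵥ P *ᵥ y + ε * (star v ⬝ᵥ v) := by
    conv_lhs => rw [hD]
    rw [Matrix.add_mulVec, dotProduct_add, ← Matrix.mulVec_mulVec, ← Matrix.mulVec_mulVec,
      dd_adj Aᴴ, conjTranspose_conjTranspose, Matrix.sub_mulVec, ← Matrix.mulVec_mulVec,
      Matrix.mulVec_sub, dotProduct_sub, Matrix.smul_mulVec, Matrix.one_mulVec, dotProduct_smul]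
    rfl
  have hv2 : star (ζ • v) ⬝ᵥ P *ᵥ (ζ • v) = star v ⬝ᵥ P *ᵥ v := by
    rw [star_smul, smul_dotProduct, Matrix.mulVec_smul, dotProduct_smul, smul_smul]
    have : star ζ * ζ = 1 := by
      change (starRingEnd ℂ) ζ * ζ = 1
      rw [← Complex.normSq_eq_conj_mul_self, Complex.normSq_eq_norm_sq, hζ]; simp
    rw [this, one_smul]
  rw [← he, hv1] at hv2
  simp only [star_sub, star_smul, sub_dotProduct, smul_dotProduct, Matrix.mulVec_sub,
    Matrix.mulVec_smul, dotProduct_sub, dotProduct_smul, smul_eq_mul] at hv2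
  have hs' := hs u
  rw [hdM] at hs'
  rw [hb', hb] at hv2
  set U := star u ⬝ᵥ u
  set d := star y ⬝ᵥ P *ᵥ y
  set N := star v ⬝ᵥ v
  have h := congrArg Complex.re hv2
  simp [U0, ← hd.2] at h
  have hnl : ‖l‖ ^ 2 = l.re * l.re + l.im * l.im := by
    rw [← Complex.normSq_eq_norm_sq, Complex.normSq_apply]
  have hN : 0 < ε * N.re := mul_pos hε (lt_of_le_of_ne N1 (Ne.symm N2))
  have h5 : ‖l‖ ^ 2 * d.re ≤ ‖l‖ ^ 2 * (s * U.re) := mul_le_mul_of_nonneg_left hs' (by positivity)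
  have h6 : ‖l‖ ^ 2 * s * U.re ≤ (2 * l.re - 1) * U.re := mul_le_mul_of_nonneg_right hl U1
  have h7 : 0 ≤ (2 * l.re - 1) * d.re := mul_nonneg hl0.le hd.1
  rw [hnl] at h5 h6
  nlinarith

section
attribute [local instance] Matrix.linftyOpNormedRing Matrix.linftyOpNormedAlgebra
lemma dd_pow {n : ℕ} (hn : 0 < n) (M : Matrix (Fin n) (Fin n) ℂ) (hM : SchurStableC M) :
    Tendsto (fun k : ℕ => M ^ k) atTop (𝓝 0) := by
  have : Nonempty (Fin n) := ⟨⟨0, hn⟩⟩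
  have h1 : spectralRadius ℂ M < (1 : NNReal) :=
    spectrum.spectralRadius_lt_of_forall_lt M fun z hz => by
      have := hM z hz
      exact_mod_cast this
  obtain ⟨r, hr1, hr2⟩ := ENNReal.lt_iff_exists_nnreal_btwn.mp h1
  have h2 := (spectrum.pow_nnnorm_pow_one_div_tendsto_nhds_spectralRadius M).eventually_lt_const hr1
  have hr : r < 1 := by exact_mod_cast hr2
  refine tendsto_zero_iff_norm_tendsto_zero.mpr ?_
  have h3 : Tendsto (fun k : ℕ => (r : ℝ) ^ k) atTop (𝓝 0) :=
    tendsto_pow_atTop_nhds_zero_of_lt_one r.2 (by exact_mod_cast hr)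
  refine squeeze_zero' (Eventually.of_forall fun k => norm_nonneg _) ?_ h3
  filter_upwards [h2, eventually_gt_atTop 0] with k hk hk0
  have h4 : (‖M ^ k‖₊ : ENNReal) ≤ (r : ENNReal) ^ k := by
    have h5 := ENNReal.rpow_le_rpow hk.le (Nat.cast_nonneg k : (0 : ℝ) ≤ k)
    rw [← ENNReal.rpow_mul, one_div_mul_cancel (by positivity), ENNReal.rpow_one,
      ENNReal.rpow_natCast] at h5
    exact h5
  exact_mod_cast h4
end

lemma dd_pow_real {n : ℕ} (hn : 0 < n) (M : Matrix (Fin n) (Fin n) ℝ) (hM : SchurStable M) :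
    Tendsto (fun k : ℕ => M ^ k) atTop (𝓝 0) := by
  have h := dd_pow hn _ hM
  have h2 : Tendsto (fun k : ℕ => ((M.map Complex.ofReal) ^ k).map Complex.re) atTop
      (𝓝 ((0 : Matrix (Fin n) (Fin n) ℂ).map Complex.re)) :=
    ((continuous_id.matrix_map Complex.continuous_re).tendsto _).comp h
  have h3 : ∀ k : ℕ, ((M.map Complex.ofReal) ^ k).map Complex.re = M ^ k := by
    intro k
    have : (M.map Complex.ofReal) ^ k = (M ^ k).map Complex.ofReal :=
      (map_pow (Complex.ofRealHom.mapMatrix) M k).symm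
    rw [this]; ext i j; simp
  simp only [h3] at h2
  convert h2 using 2
  ext i j; simp

lemma dd_entry {n : ℕ} {P : Matrix (Fin n) (Fin n) ℝ} (hP : P.PosSemidef) (i j : Fin n) :
    |P i j| ≤ P.trace := by
  have hd : ∀ k, 0 ≤ P k k := fun k => hP.diag_nonneg
  have hs : P j i = P i j := by simpa using hP.isHermitian.apply i j
  have h1 := hP.dotProduct_mulVec_nonneg (Pi.single i 1 + Pi.single j 1)
  have h2 := hP.dotProduct_mulVec_nonneg (Pi.single i 1 - Pi.single j 1)
  simp [Matrix.mulVec_add, Matrix.mulVec_sub, add_dotProduct, sub_dotProduct, hs] at h1 h2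
  have hi : P i i ≤ P.trace := Finset.single_le_sum (f := fun k => P k k) (fun k _ => hd k) (Finset.mem_univ i)
  have hj : P j j ≤ P.trace := Finset.single_le_sum (f := fun k => P k k) (fun k _ => hd k) (Finset.mem_univ j)
  rw [abs_le]; constructor <;> linarith

lemma dd_R {n m : ℕ} {P : Matrix (Fin n) (Fin n) ℝ} (B : Matrix (Fin n) (Fin m) ℝ)
    (hP : P.PosSemidef) : (1 + Bᵀ * P * B).PosDef := by
  have := hP.conjTranspose_mul_mul_same B
  rw [conjTranspose_eq_transpose_of_trivial] at this
  exact PosDef.one.add_posSemidef this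

lemma dd_K {n m : ℕ} (A : Matrix (Fin n) (Fin n) ℝ) (B : Matrix (Fin n) (Fin m) ℝ)
    {P : Matrix (Fin n) (Fin n) ℝ} (hP : P.PosSemidef) :
    Bᵀ * P * A = gainK A B P + Bᵀ * P * B * gainK A B P := by
  have hu := (Matrix.isUnit_iff_isUnit_det _).mp (dd_R B hP).isUnit
  have : (1 + Bᵀ * P * B) * gainK A B P = Bᵀ * P * A := by
    rw [gainK, ← Matrix.mul_assoc, Matrix.mul_nonsing_inv _ hu, Matrix.one_mul]
  rw [← this, Matrix.add_mul, Matrix.one_mul]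

lemma dd_D {n m : ℕ} {A : Matrix (Fin n) (Fin n) ℝ} {B : Matrix (Fin n) (Fin m) ℝ} {ε : ℝ}
    {P : Matrix (Fin n) (Fin n) ℝ}
    (h : Aᵀ * P * A - P - Aᵀ * P * B * (1 + Bᵀ * P * B)⁻¹ * (Bᵀ * P * A)
      + ε • (1 : Matrix (Fin n) (Fin n) ℝ) = 0) :
    P = Aᵀ * P * (A - B * gainK A B P) + ε • (1 : Matrix (Fin n) (Fin n) ℝ) := by
  have h2 : Aᵀ * P * (A - B * gainK A B P) =
      Aᵀ * P * A - Aᵀ * P * B * (1 + Bᵀ * P * B)⁻¹ * (Bᵀ * P * A) := by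
    rw [gainK]; simp only [Matrix.mul_sub, Matrix.mul_assoc]
  rw [h2, ← sub_eq_zero, ← neg_eq_zero, ← h]; abel

/-- one-step inequality -/
lemma dd_step {n m : ℕ} {A : Matrix (Fin n) (Fin n) ℝ} {B : Matrix (Fin n) (Fin m) ℝ} {ε : ℝ}
    {P : Matrix (Fin n) (Fin n) ℝ} (h : IsDARESol A B ε P) (hε : ε ≤ 1)
    (F : Matrix (Fin m) (Fin n) ℝ) :
    ((A - B * F)ᵀ * P * (A - B * F) + (Fᵀ * F + 1) - P).PosSemidef := by
  have hp := h.1.posSemidef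
  have hPT : Pᵀ = P := by
    have := hp.isHermitian; rwa [IsHermitian, conjTranspose_eq_transpose_of_trivial] at this
  have hK := dd_K A B hp
  have hD := dd_D h.2
  have hR := (dd_R B hp).posSemidef.conjTranspose_mul_mul_same (F - gainK A B P)
  rw [conjTranspose_eq_transpose_of_trivial] at hR
  have h1 : ((1 - ε) • (1 : Matrix (Fin n) (Fin n) ℝ)).PosSemidef :=
    PosSemidef.one.smul (sub_nonneg.mpr hε)
  have h2 := hR.add h1
  generalize gainK A B P = K at *
  have hKT : Aᵀ * P * B = Kᵀ + Kᵀ * (Bᵀ * P * B) := by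
    have := congrArg Matrix.transpose hK
    simpa [Matrix.transpose_mul, hPT, Matrix.mul_assoc] using this
  convert h2 using 1
  conv_lhs => rw [sub_eq_add_neg]; arg 2; rw [hD]
  simp only [Matrix.transpose_sub, Matrix.transpose_mul, Matrix.mul_sub, Matrix.sub_mul,
    Matrix.mul_add, Matrix.add_mul, Matrix.mul_assoc, Matrix.mul_one, Matrix.one_mul, sub_smul, one_smul] at hK hKT ⊢
  have e1 : Aᵀ * (P * (B * F)) = Kᵀ * F + Kᵀ * (Bᵀ * (P * (B * F))) := by
    have := congrArg (· * F) hKT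
    simpa only [Matrix.add_mul, Matrix.mul_assoc] using this
  have e2 : Aᵀ * (P * (B * K)) = Kᵀ * K + Kᵀ * (Bᵀ * (P * (B * K))) := by
    have := congrArg (· * K) hKT
    simpa only [Matrix.add_mul, Matrix.mul_assoc] using this
  rw [hK, e1, e2]
  simp only [Matrix.mul_add]
  abel

lemma dd_bound {n m : ℕ} (hn : 0 < n) (A : Matrix (Fin n) (Fin n) ℝ) (B : Matrix (Fin n) (Fin m) ℝ)
    (hstab : Stabilizable A B) : ∃ C : ℝ, ∀ ε P, IsDARESol A B ε P → ε ≤ 1 → 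
      ∀ i j, |P i j| ≤ C := by
  obtain ⟨F, hF⟩ := hstab
  set G := A - B * F with hG
  set Q := Fᵀ * F + 1 with hQ
  let S : ℕ → Matrix (Fin n) (Fin n) ℝ := fun N => ∑ k ∈ Finset.range N, (G ^ k)ᵀ * Q * G ^ k
  have hpow := dd_pow_real hn G hF
  have hlim : Tendsto (fun k : ℕ => ∑ i, ∑ j, |(G ^ k * (G ^ k)ᵀ) i j|) atTop (𝓝 0) := by
    have hc : Continuous fun H : Matrix (Fin n) (Fin n) ℝ => ∑ i, ∑ j, |(H * Hᵀ) i j| := by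
      fun_prop
    have := (hc.tendsto 0).comp hpow
    simpa [Function.comp_def] using this
  obtain ⟨N, hN⟩ := (hlim.eventually_lt_const (show (0 : ℝ) < 1 / 2 by norm_num)).exists
  refine ⟨2 * (S N).trace, fun ε P hP hε i j => ?_⟩
  have hp := hP.1.posSemidef
  refine (dd_entry hp i j).trans ?_
  have hstep := dd_step hP hε F
  rw [← hG, ← hQ] at hstep
  have hind : ∀ k, ((G ^ k)ᵀ * P * G ^ k + S k - P).PosSemidef := by
    intro k
    induction k with
    | zero => simpa [S] using PosSemidef.zero
    | succ k ih =>
      have h1 := hstep.conjTranspose_mul_mul_same (G ^ k)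
      rw [conjTranspose_eq_transpose_of_trivial] at h1
      convert h1.add ih using 1
      simp only [S, Finset.sum_range_succ, pow_succ', Matrix.transpose_mul, Matrix.mul_add,
        Matrix.mul_sub, Matrix.add_mul, Matrix.sub_mul, Matrix.mul_assoc]
      abel
  have htr := (hind N).trace_nonneg
  rw [trace_sub, trace_add] at htr
  have h2 : ((G ^ N)ᵀ * P * G ^ N).trace ≤ 1 / 2 * P.trace := by
    rw [Matrix.trace_mul_comm, ← Matrix.mul_assoc]
    generalize G ^ N * (G ^ N)ᵀ = H at hN
    calc (H * P).trace = ∑ i, ∑ j, H i j * P j i := by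
          simp [Matrix.trace, Matrix.mul_apply]
      _ ≤ ∑ i, ∑ j, |H i j| * P.trace := by
          refine Finset.sum_le_sum fun i _ => Finset.sum_le_sum fun j _ => ?_
          refine (le_abs_self _).trans ?_
          rw [abs_mul]
          exact mul_le_mul_of_nonneg_left (dd_entry hp j i) (abs_nonneg _)
      _ = (∑ i, ∑ j, |H i j|) * P.trace := by simp only [Finset.sum_mul]
      _ ≤ _ := mul_le_mul_of_nonneg_right hN.le hp.trace_nonneg
  linarith

lemma dd_psd_map {n : ℕ} {P : Matrix (Fin n) (Fin n) ℝ} (hP : P.PosSemidef) :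
    (P.map Complex.ofReal).PosSemidef := by
  open scoped MatrixOrder in
  obtain ⟨L, hL⟩ := CStarAlgebra.nonneg_iff_eq_star_mul_self.mp hP.nonneg
  have : P.map Complex.ofReal = (L.map Complex.ofReal)ᴴ * L.map Complex.ofReal := by
    ext i j
    simp [hL, Matrix.mul_apply, Matrix.star_apply]
  rw [this]
  exact posSemidef_conjTranspose_mul_self _

lemma dd_mul_map {a b c : ℕ} (M : Matrix (Fin a) (Fin b) ℝ) (N : Matrix (Fin b) (Fin c) ℝ) :
    (M * N).map Complex.ofReal = M.map Complex.ofReal * N.map Complex.ofReal := by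
  ext i j; simp [Matrix.mul_apply]

lemma dd_add_map {a b : ℕ} (M N : Matrix (Fin a) (Fin b) ℝ) :
    (M + N).map Complex.ofReal = M.map Complex.ofReal + N.map Complex.ofReal := by
  ext i j; simp

lemma dd_sub_map {a b : ℕ} (M N : Matrix (Fin a) (Fin b) ℝ) :
    (M - N).map Complex.ofReal = M.map Complex.ofReal - N.map Complex.ofReal := by
  ext i j; simp

lemma dd_T_map {a b : ℕ} (M : Matrix (Fin a) (Fin b) ℝ) :
    (Mᵀ).map Complex.ofReal = (M.map Complex.ofReal)ᴴ := by
  ext i j; simp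

lemma dd_K_c {n m : ℕ} (A : Matrix (Fin n) (Fin n) ℝ) (B : Matrix (Fin n) (Fin m) ℝ)
    {P : Matrix (Fin n) (Fin n) ℝ} (hP : P.PosSemidef) :
    (B.map Complex.ofReal)ᴴ * P.map Complex.ofReal * A.map Complex.ofReal =
      (gainK A B P).map Complex.ofReal +
      (B.map Complex.ofReal)ᴴ * P.map Complex.ofReal * B.map Complex.ofReal
        * (gainK A B P).map Complex.ofReal := by
  have := congrArg (fun M => M.map Complex.ofReal) (dd_K A B hP)
  simpa only [dd_mul_map, dd_add_map, dd_T_map] using this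

lemma dd_D_c {n m : ℕ} {A : Matrix (Fin n) (Fin n) ℝ} {B : Matrix (Fin n) (Fin m) ℝ} {ε : ℝ}
    {P : Matrix (Fin n) (Fin n) ℝ}
    (h : P = Aᵀ * P * (A - B * gainK A B P) + ε • (1 : Matrix (Fin n) (Fin n) ℝ)) :
    P.map Complex.ofReal = (A.map Complex.ofReal)ᴴ * P.map Complex.ofReal *
      (A.map Complex.ofReal - B.map Complex.ofReal * (gainK A B P).map Complex.ofReal)
      + (ε : ℂ) • (1 : Matrix (Fin n) (Fin n) ℂ) := by
  have := congrArg (fun M => M.map Complex.ofReal) h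
  simp only [dd_mul_map, dd_add_map, dd_T_map, dd_sub_map] at this
  have h1 : (ε • (1 : Matrix (Fin n) (Fin n) ℝ)).map Complex.ofReal =
      (ε : ℂ) • (1 : Matrix (Fin n) (Fin n) ℂ) := by
    ext i j
    by_cases hij : i = j <;> simp [Matrix.one_apply, hij]
  rwa [h1] at this

lemma dd_zero_real {n m : ℕ} {A : Matrix (Fin n) (Fin n) ℝ} {B : Matrix (Fin n) (Fin m) ℝ}
    {P : Matrix (Fin n) (Fin n) ℝ} (hstab : Stabilizable A B) (hA : EigInClosedUnitDisc A)
    (hP : P.PosSemidef) (h : P = Aᵀ * P * (A - B * gainK A B P)) : P = 0 := by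
  obtain ⟨F, hF⟩ := hstab
  rw [SchurStable, dd_sub_map, dd_mul_map] at hF
  have hD := dd_D_c (ε := 0) (A := A) (B := B) (P := P) (by rw [zero_smul, add_zero]; exact h)
  rw [Complex.ofReal_zero, zero_smul, add_zero] at hD
  have := dd_zero _ _ _ _ _ (dd_psd_map hP) (dd_K_c A B hP) hD hA hF
  ext i j
  have h2 := congrFun (congrFun this i) j
  simpa using h2

lemma dd_gain_cont {n m : ℕ} (A : Matrix (Fin n) (Fin n) ℝ) (B : Matrix (Fin n) (Fin m) ℝ)
    {P : Matrix (Fin n) (Fin n) ℝ} (hP : P.PosSemidef) : ContinuousAt (gainK A B) P := by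
  have hu := (Matrix.isUnit_iff_isUnit_det _).mp (dd_R B hP).isUnit
  have h0 : (1 + Bᵀ * P * B).det ≠ 0 := hu.ne_zero
  have : gainK A B = fun P => ((1 + Bᵀ * P * B).det⁻¹ • (1 + Bᵀ * P * B).adjugate) * (Bᵀ * P * A) := by
    funext P
    rw [gainK, Matrix.inv_def, Ring.inverse_eq_inv']
  rw [this]
  have c1 : Continuous fun P : Matrix (Fin n) (Fin n) ℝ => 1 + Bᵀ * P * B := by fun_prop
  have c2 : ContinuousAt (fun P : Matrix (Fin n) (Fin n) ℝ => (1 + Bᵀ * P * B).det⁻¹) P :=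
    c1.matrix_det.continuousAt.inv₀ h0
  have c3 : Continuous fun P : Matrix (Fin n) (Fin n) ℝ => Bᵀ * P * A := by fun_prop
  have c4 : Continuous fun t : Matrix (Fin m) (Fin m) ℝ × Matrix (Fin m) (Fin n) ℝ => t.1 * t.2 := by
    fun_prop
  exact c4.continuousAt.comp
    ((c2.smul c1.matrix_adjugate.continuousAt).prodMk c3.continuousAt)

lemma dd_psd_lim {n : ℕ} {Q : ℕ → Matrix (Fin n) (Fin n) ℝ} {P : Matrix (Fin n) (Fin n) ℝ}
    (hQ : ∀ k, (Q k).PosSemidef) (h : Tendsto Q atTop (𝓝 P)) : P.PosSemidef := by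
  refine PosSemidef.of_dotProduct_mulVec_nonneg ?_ ?_
  · have h1 : Tendsto (fun k => (Q k)ᴴ) atTop (𝓝 Pᴴ) :=
      (continuous_id.matrix_conjTranspose.tendsto P).comp h
    have h2 : (fun k => (Q k)ᴴ) = Q := funext fun k => (hQ k).isHermitian
    rw [h2] at h1
    exact tendsto_nhds_unique h1 h
  · intro x
    have hc : Continuous fun M : Matrix (Fin n) (Fin n) ℝ => star x ⬝ᵥ M *ᵥ x := by fun_prop
    exact ge_of_tendsto' ((hc.tendsto P).comp h) fun k => (hQ k).dotProduct_mulVec_nonneg x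

lemma dd_quad {m : ℕ} (M : Matrix (Fin m) (Fin m) ℂ) (u : Fin m → ℂ) :
    (star u ⬝ᵥ M *ᵥ u).re ≤ (∑ i, ∑ j, ‖M i j‖) * (star u ⬝ᵥ u).re := by
  have hU : (star u ⬝ᵥ u).re = ∑ k, ‖u k‖ ^ 2 := by
    simp only [dotProduct, Complex.re_sum, Pi.star_apply]
    refine Finset.sum_congr rfl fun k _ => ?_
    rw [← Complex.normSq_eq_norm_sq, Complex.normSq_apply]
    simp
  have hk : ∀ k, ‖u k‖ ^ 2 ≤ ∑ k, ‖u k‖ ^ 2 := fun k =>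
    Finset.single_le_sum (f := fun k => ‖u k‖ ^ 2) (fun _ _ => by positivity) (Finset.mem_univ k)
  rw [hU]
  generalize (∑ k, ‖u k‖ ^ 2) = T at hk
  refine (Complex.re_le_norm _).trans ?_
  simp only [dotProduct, Matrix.mulVec, Finset.mul_sum, Pi.star_apply]
  simp only [Finset.sum_mul]
  refine (norm_sum_le _ _).trans (Finset.sum_le_sum fun i _ => ?_)
  refine (norm_sum_le _ _).trans (Finset.sum_le_sum fun j _ => ?_)
  rw [norm_mul, norm_mul, norm_star]
  have : ‖u i‖ * ‖u j‖ ≤ T := by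
    nlinarith [hk i, hk j, sq_nonneg (‖u i‖ - ‖u j‖)]
  calc _ = ‖M i j‖ * (‖u i‖ * ‖u j‖) := by ring
    _ ≤ _ := mul_le_mul_of_nonneg_left this (norm_nonneg _)

lemma dd_omega {n : ℕ} (A : Matrix (Fin n) (Fin n) ℝ) (ω : ℝ) (hω : ω ∈ Set.Icc (-Real.pi) Real.pi)
    (h : (Complex.exp (ω * Complex.I) • (1 : Matrix (Fin n) (Fin n) ℂ)
          - A.map Complex.ofReal).det = 0) : |ω| ≤ omegaMax A := by
  have hns : ¬ SchurStable A := by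
    intro hs
    have := hs _ ((dd_mem_spec _ _).mpr h)
    rw [Complex.norm_exp_ofReal_mul_I] at this
    exact lt_irrefl _ this
  rw [omegaMax, if_neg hns]
  refine le_csSup ⟨Real.pi, fun x hx => hx.1.2⟩ ⟨⟨abs_nonneg _, abs_le.mpr hω⟩, ?_⟩
  rcases abs_choice ω with h1 | h1
  · rw [h1]; exact h
  · rw [h1]
    have h2 : Complex.exp (((-ω : ℝ) : ℂ) * Complex.I) • (1 : Matrix (Fin n) (Fin n) ℂ)
          - A.map Complex.ofReal = (Complex.exp (ω * Complex.I) • (1 : Matrix (Fin n) (Fin n) ℂ)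
          - A.map Complex.ofReal).map (starRingEnd ℂ) := by
      ext i j
      by_cases hij : i = j <;>
      simp [Matrix.one_apply, hij, ← Complex.exp_conj]
    rw [h2]
    have h3 := RingHom.map_det (starRingEnd ℂ) (Complex.exp (ω * Complex.I) • (1 : Matrix (Fin n) (Fin n) ℂ)
          - A.map Complex.ofReal)
    rw [h, map_zero] at h3
    exact h3.symm

end DD

/-- nonsingularity of `e^{iω}I − A + ρ e^{−iωκ} B K_ε` for all
`ω ∈ [−π, π]` and integer delays `κ ∈ {0,…,κ̄}`, for all sufficiently small `ε > 0`,
provided `κ̄·ω_max < π/2` and `ρ cos(κ̄·ω_max) > 1/2`. -/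
theorem delay_det_condition {n m : ℕ}
    (A : Matrix (Fin n) (Fin n) ℝ) (B : Matrix (Fin n) (Fin m) ℝ)
    (hstab : Stabilizable A B) (hA : EigInClosedUnitDisc A)
    (κbar : ℕ) (hκbar : (κbar : ℝ) * omegaMax A < Real.pi / 2)
    (ρ : ℝ) (hρpos : 0 < ρ) (hρ : 1 / 2 < ρ * Real.cos ((κbar : ℝ) * omegaMax A))
    (P : ℝ → Matrix (Fin n) (Fin n) ℝ)
    (hP : ∀ ε > (0 : ℝ), IsDARESol A B ε (P ε)) :
    ∃ εstar > (0 : ℝ), ∀ ε ∈ Set.Ioc (0 : ℝ) εstar,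
      ∀ ω ∈ Set.Icc (-Real.pi) Real.pi, ∀ κ : ℕ, κ ≤ κbar →
        (Complex.exp (ω * Complex.I) • (1 : Matrix (Fin n) (Fin n) ℂ)
          - A.map Complex.ofReal
          + ((ρ : ℂ) * Complex.exp (-(ω * (κ : ℝ)) * Complex.I)) •
              (B * gainK A B (P ε)).map Complex.ofReal).det ≠ 0 := by
  rcases Nat.eq_zero_or_pos n with rfl | hn
  · exact ⟨1, one_pos, fun ε _ ω _ κ _ => by simp⟩
  obtain ⟨C, hC⟩ := dd_bound hn A B hstab
  by_contra hcon
  push Not at hcon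
  have hcon' := fun k : ℕ => hcon (1 / ((k : ℝ) + 1)) Nat.one_div_pos_of_nat
  choose e he w hw κ hκ hdet using hcon'
  have he0 : ∀ k, 0 < e k := fun k => (he k).1
  have he1 : ∀ k, e k ≤ 1 := fun k => (he k).2.trans (by
    rw [div_le_one (by positivity)]; linarith [(Nat.cast_nonneg k : (0 : ℝ) ≤ k)])
  have helim : Tendsto e atTop (𝓝 0) :=
    squeeze_zero (fun k => (he0 k).le) (fun k => (he k).2) tendsto_one_div_add_atTop_nhds_zero_nat
  have hcpt : IsCompact ({M : Matrix (Fin n) (Fin n) ℝ | ∀ i, M i ∈ {r : Fin n → ℝ | ∀ j, r j ∈ Set.Icc (-C) C}} ×ˢ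
      (Set.Icc (-Real.pi) Real.pi ×ˢ Set.Iic κbar)) := by
    refine IsCompact.prod ?_ (isCompact_Icc.prod (Set.finite_Iic κbar).isCompact)
    exact isCompact_pi_infinite fun i => isCompact_pi_infinite fun j => isCompact_Icc
  have : FirstCountableTopology (Matrix (Fin n) (Fin n) ℝ) :=
    inferInstanceAs (FirstCountableTopology (Fin n → Fin n → ℝ))
  obtain ⟨⟨P0, w0, κ0⟩, hmem, φ, hφ, hlim⟩ := hcpt.tendsto_subseq
    (x := fun k => (P (e k), w k, κ k)) fun k =>
      ⟨fun i j => abs_le.mp (hC _ _ (hP _ (he0 k)) (he1 k) i j), hw k, hκ k⟩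
  rw [nhds_prod_eq, nhds_prod_eq] at hlim
  have hPlim : Tendsto (fun k => P (e (φ k))) atTop (𝓝 P0) := hlim.fst
  have hwlim : Tendsto (fun k => w (φ k)) atTop (𝓝 w0) := hlim.snd.fst
  have hκlim : Tendsto (fun k => κ (φ k)) atTop (𝓝 κ0) := hlim.snd.snd
  rw [nhds_discrete, tendsto_pure] at hκlim
  have hφe : Tendsto (fun k => e (φ k)) atTop (𝓝 0) := helim.comp hφ.tendsto_atTop
  have hpsd : ∀ k, (P (e (φ k))).PosSemidef := fun k => (hP _ (he0 _)).1.posSemidef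
  have hP0 : P0.PosSemidef := dd_psd_lim hpsd hPlim
  have hKlim : Tendsto (fun k => gainK A B (P (e (φ k)))) atTop (𝓝 (gainK A B P0)) :=
    (dd_gain_cont A B hP0).tendsto.comp hPlim
  have hDk : ∀ k, P (e (φ k)) = Aᵀ * P (e (φ k)) * (A - B * gainK A B (P (e (φ k))))
      + e (φ k) • (1 : Matrix (Fin n) (Fin n) ℝ) := fun k => dd_D (hP _ (he0 _)).2
  have hP00 : P0 = 0 := by
    apply dd_zero_real hstab hA hP0
    have hc : Continuous fun t : Matrix (Fin n) (Fin n) ℝ × Matrix (Fin m) (Fin n) ℝ × ℝ =>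
        Aᵀ * t.1 * (A - B * t.2.1) + t.2.2 • (1 : Matrix (Fin n) (Fin n) ℝ) := by fun_prop
    have h1 := (hc.tendsto (P0, gainK A B P0, 0)).comp
      (hPlim.prodMk_nhds (hKlim.prodMk_nhds hφe))
    have h2 := tendsto_nhds_unique (hPlim.congr hDk) h1
    simpa using h2
  subst hP00
  have hK0 : gainK A B (0 : Matrix (Fin n) (Fin n) ℝ) = 0 := by simp [gainK]
  rw [hK0] at hKlim
  -- limiting determinant
  have hdet0 : (Complex.exp (w0 * Complex.I) • (1 : Matrix (Fin n) (Fin n) ℂ)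
          - A.map Complex.ofReal).det = 0 := by
    have hc : Continuous fun t : Matrix (Fin m) (Fin n) ℝ × ℝ =>
        (Complex.exp (t.2 * Complex.I) • (1 : Matrix (Fin n) (Fin n) ℂ)
          - A.map Complex.ofReal
          + ((ρ : ℂ) * Complex.exp (-(t.2 * (κ0 : ℝ)) * Complex.I)) •
              (B * t.1).map Complex.ofReal).det := by
      refine Continuous.matrix_det ?_
      have c1 : Continuous fun t : Matrix (Fin m) (Fin n) ℝ × ℝ =>
          (Complex.exp (t.2 * Complex.I) • (1 : Matrix (Fin n) (Fin n) ℂ)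
          - A.map Complex.ofReal) := by fun_prop
      have c2 : Continuous fun t : Matrix (Fin m) (Fin n) ℝ × ℝ =>
          ((ρ : ℂ) * Complex.exp (-(t.2 * (κ0 : ℝ)) * Complex.I)) := by fun_prop
      refine c1.add (c2.smul ?_)
      have h0 : Continuous fun t : Matrix (Fin m) (Fin n) ℝ × ℝ => B * t.1 := by fun_prop
      exact h0.matrix_map Complex.continuous_ofReal
    have h1 := (hc.tendsto (0, w0)).comp (hKlim.prodMk_nhds hwlim)
    have h2 : Tendsto (fun _ : ℕ => (0 : ℂ)) atTop (𝓝 0) := tendsto_const_nhds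
    have h3 := tendsto_nhds_unique (h2.congr' ?_) h1
    · have h4 : (B * (0 : Matrix (Fin m) (Fin n) ℝ)).map Complex.ofReal = 0 := by
        rw [Matrix.mul_zero]; ext i j; simp
      simp only [h4, smul_zero, add_zero] at h3
      exact h3.symm
    · filter_upwards [hκlim] with k hk
      have := hdet (φ k)
      rw [hk] at this
      exact this.symm
  have hw0 := dd_omega A w0 hmem.2.1 hdet0
  have hκ0 : κ0 ≤ κbar := hmem.2.2
  have hcos : 1 / 2 < ρ * Real.cos (w0 * κ0) := by
    refine hρ.trans_le (mul_le_mul_of_nonneg_left ?_ hρpos.le)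
    rw [← Real.cos_abs (w0 * κ0), abs_mul, abs_of_nonneg (Nat.cast_nonneg κ0 : (0 : ℝ) ≤ κ0)]
    have h1 : |w0| * κ0 ≤ κbar * omegaMax A := by
      rw [mul_comm]
      exact mul_le_mul (by exact_mod_cast hκ0) hw0 (abs_nonneg _) (by positivity)
    exact Real.cos_le_cos_of_nonneg_of_le_pi (by positivity) (by linarith [Real.pi_pos]) h1
  let s : Matrix (Fin n) (Fin n) ℝ → ℝ := fun M => ∑ i, ∑ j,
    ‖((B.map Complex.ofReal)ᴴ * M.map Complex.ofReal * B.map Complex.ofReal) i j‖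
  have hs : Tendsto (fun k => s (P (e (φ k)))) atTop (𝓝 0) := by
    have hc : Continuous s := by
      have h0 : Continuous fun M : Matrix (Fin n) (Fin n) ℝ =>
        (B.map Complex.ofReal)ᴴ * M.map Complex.ofReal * B.map Complex.ofReal := by
          have : Continuous fun M : Matrix (Fin n) (Fin n) ℝ => M.map Complex.ofReal :=
            continuous_id.matrix_map Complex.continuous_ofReal
          fun_prop
      refine continuous_finsetSum _ fun i _ => continuous_finsetSum _ fun j _ => ?_
      exact (h0.matrix_elem i j).norm
    have h1 := (hc.tendsto 0).comp hPlim
    have h2 : s 0 = 0 := by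
      have : (0 : Matrix (Fin n) (Fin n) ℝ).map Complex.ofReal = 0 := by ext i j; simp
      simp [s, this]
    rwa [h2] at h1
  have hfin : ∀ᶠ k in atTop, ρ ^ 2 * s (P (e (φ k))) < 2 * (ρ * Real.cos (w (φ k) * κ0)) - 1 := by
    have h1 : Tendsto (fun k => ρ ^ 2 * s (P (e (φ k)))) atTop (𝓝 (ρ ^ 2 * 0)) := hs.const_mul _
    have hc : Continuous fun t : ℝ => 2 * (ρ * Real.cos (t * κ0)) - 1 := by fun_prop
    have h2 := (hc.tendsto w0).comp hwlim
    exact h1.eventually_lt h2 (by linarith)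
  obtain ⟨k, hk, hkκ⟩ := (hfin.and hκlim).exists
  have hd := hdet (φ k)
  rw [hkκ] at hd
  obtain ⟨v, hv, hv0⟩ := Matrix.exists_mulVec_eq_zero_iff.mpr hd
  have hs0 : 0 ≤ s (P (e (φ k))) :=
    Finset.sum_nonneg fun i _ => Finset.sum_nonneg fun j _ => norm_nonneg _
  have hlre : ((ρ : ℂ) * Complex.exp (-((w (φ k) : ℂ) * ((κ0 : ℝ) : ℂ)) * Complex.I)).re =
      ρ * Real.cos (w (φ k) * κ0) := by
    rw [Complex.re_ofReal_mul]
    have : (-((w (φ k) : ℂ) * ((κ0 : ℝ) : ℂ)) * Complex.I) = ((-(w (φ k) * κ0) : ℝ) : ℂ) * Complex.I := by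
      push_cast; ring
    rw [this, Complex.exp_ofReal_mul_I_re, Real.cos_neg]
  have hln : ‖((ρ : ℂ) * Complex.exp (-((w (φ k) : ℂ) * ((κ0 : ℝ) : ℂ)) * Complex.I))‖ = ρ := by
    have : (-((w (φ k) : ℂ) * ((κ0 : ℝ) : ℂ)) * Complex.I) = ((-(w (φ k) * κ0) : ℝ) : ℂ) * Complex.I := by
      push_cast; ring
    rw [norm_mul, this, Complex.norm_exp_ofReal_mul_I, mul_one, Complex.norm_real,
      Real.norm_of_nonneg hρpos.le]
  refine dd_lyap _ _ _ _ (dd_psd_map (hpsd k)) (e (φ k)) (he0 _) (dd_K_c A B (hpsd k))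
    (dd_D_c (hDk k)) v hv _ (Complex.exp (w (φ k) * Complex.I)) (Complex.norm_exp_ofReal_mul_I _)
    ?_ (s (P (e (φ k)))) (fun u => dd_quad _ u) (by rw [hln, hlre]; exact hk.le)
    (by rw [hlre]; exact lt_of_le_of_lt (by positivity) hk)
  rw [dd_mul_map, Matrix.add_mulVec, Matrix.sub_mulVec, Matrix.smul_mulVec, Matrix.smul_mulVec,
    Matrix.one_mulVec, ← Matrix.mulVec_mulVec] at hv0
  rw [← sub_eq_zero, ← neg_eq_zero, ← hv0]
  abel
end
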